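/- For every natural number n ≥ 30 with n ∉ {35, 36, 37, 53}, the open interval (8n/9, n) contains a prime number. -/

import Mathlib

/-!
The proof is Chebyshev's, with the factorials `⌊8n / j⌋!`. For an integer weight `c` with
`∑ c j / j = 0`, the identity `log N! = ∑ d ≤ N, Λ d * ⌊N / d⌋` gives
`∑ c j * log ⌊8n / j⌋! = ∑ Λ d * f ⌊8n / d⌋` with `f N = ∑ c j * ⌊N / j⌋`, and by Stirling's formula
the left side is `-8n * ∑ c j * log j / j + O(log n)`. The weight is chosen such that `f ≤ 1`, and
`f N ≤ 0` for all `N < 15120` other than `8`. As `⌊8n / d⌋ = 8` exactly when `8n / 9 < d ≤ n`, the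
right side is then at most `ψ n - ψ (8n / 9) + ψ (n / 1890)`. Crude bounds for the last term and for
the prime powers leave a positive contribution of primes once `n ≥ 2 ^ 20`; smaller `n` are
covered by a chain of primes with consecutive ratios below `9 / 8`.
-/

open Finset Real
open ArithmeticFunction hiding log id
open scoped Nat Chebyshev

/-- The step function `N ↦ ∑ c * ⌊N / j⌋` of a finite weight `w`, encoded as its set of
pairs `(j, c)`. -/
def floorSum (w : Finset (ℕ × ℤ)) (N : ℕ) : ℤ :=
  ∑ t ∈ w, t.2 * (N / t.1 : ℕ)

section Weight

variable {w : Finset (ℕ × ℤ)} {P : ℕ}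

lemma floorSum_add_mul (hP : ∀ t ∈ w, t.1 ∣ P) (N q : ℕ) :
    floorSum w (N + P * q) = floorSum w N + q * floorSum w P := by
  simp only [floorSum, mul_sum, ← sum_add_distrib]
  refine sum_congr rfl fun t ht => ?_
  rcases t.1.eq_zero_or_pos with hj | hj
  · simp [hj]
  obtain ⟨e, rfl⟩ := hP t ht
  rw [mul_assoc, Nat.add_mul_div_left _ _ hj, Nat.mul_div_cancel_left _ hj]
  push_cast
  ring

lemma floorSum_mod (hP : ∀ t ∈ w, t.1 ∣ P) (h0 : floorSum w P = 0) (N : ℕ) :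
    floorSum w (N % P) = floorSum w N := by
  conv_rhs => rw [← Nat.mod_add_div N P, floorSum_add_mul hP, h0, mul_zero, add_zero]

lemma sum_div_eq_floorSum_div (hP : ∀ t ∈ w, t.1 ∣ P) (hP0 : P ≠ 0) :
    ∑ t ∈ w, (t.2 / t.1 : ℝ) = floorSum w P / P := by
  rw [floorSum, Int.cast_sum, sum_div]
  refine sum_congr rfl fun t ht => ?_
  have hj : (t.1 : ℝ) ≠ 0 := mod_cast ne_zero_of_dvd_ne_zero hP0 (hP t ht)
  have hP' : (P : ℝ) ≠ 0 := mod_cast hP0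
  rw [Int.cast_mul, Int.cast_natCast, Nat.cast_div (hP t ht) hj]
  field_simp

lemma sum_intCast_mul_eq_sub {R : Type*} [Ring R] (w : Finset (ℕ × ℤ)) (f : ℕ → R) :
    ∑ t ∈ w, (t.2 : R) * f t.1 =
      ∑ t ∈ w, (t.2.toNat : R) * f t.1 - ∑ t ∈ w, ((-t.2).toNat : R) * f t.1 := by
  rw [← sum_sub_distrib]
  refine sum_congr rfl fun t _ => ?_
  rw [← sub_mul]
  congr 1
  exact_mod_cast congrArg (Int.cast : ℤ → R) (Int.toNat_sub_toNat_neg t.2).symm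

lemma log_prod_pow_mul_div (hP : ∀ t ∈ w, t.1 ∣ P) (hP0 : P ≠ 0) (c : ℕ × ℤ → ℕ) :
    log (∏ t ∈ w, t.1 ^ (c t * (P / t.1)) : ℕ) = P * ∑ t ∈ w, c t * (log t.1 / t.1) := by
  have hj (t) (ht : t ∈ w) : (t.1 : ℝ) ≠ 0 := mod_cast ne_zero_of_dvd_ne_zero hP0 (hP t ht)
  push_cast
  rw [log_prod fun t ht => pow_ne_zero _ (hj t ht), mul_sum]
  refine sum_congr rfl fun t ht => ?_
  rw [log_pow, Nat.cast_mul, Nat.cast_div (hP t ht) (hj t ht)]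
  ring

end Weight

lemma log_factorial_eq_sum_vonMangoldt (N : ℕ) :
    log N ! = ∑ d ∈ Ioc 0 N, Λ d * (N / d : ℕ) := by
  rw [← sum_Ioc_mul_zeta_eq_sum, vonMangoldt_mul_zeta, ← prod_Ico_id_eq_factorial, Nat.cast_prod,
    log_prod fun m hm => Nat.cast_ne_zero.2 (Nat.one_le_iff_ne_zero.1 (mem_Ico.1 hm).1)]
  rfl

lemma log_factorial_div_eq_sum_vonMangoldt (X j : ℕ) :
    log (X / j)! = ∑ d ∈ Ioc 0 X, Λ d * (X / d / j : ℕ) := by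
  rw [log_factorial_eq_sum_vonMangoldt]
  simp only [Nat.div_right_comm X _ j]
  refine sum_subset (Ioc_subset_Ioc_right (Nat.div_le_self X j)) fun d hd hd' => ?_
  have hlt : X / j < d := by simp only [mem_Ioc] at hd hd'; lia
  rw [Nat.div_eq_of_lt hlt, Nat.cast_zero, mul_zero]

lemma sum_mul_log_factorial_div (w : Finset (ℕ × ℤ)) (X : ℕ) :
    ∑ t ∈ w, t.2 * log (X / t.1)! = ∑ d ∈ Ioc 0 X, Λ d * floorSum w (X / d) := by
  simp only [log_factorial_div_eq_sum_vonMangoldt, floorSum, Int.cast_sum, mul_sum]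
  rw [sum_comm]
  refine sum_congr rfl fun d _ => sum_congr rfl fun t _ => ?_
  rw [Int.cast_mul, Int.cast_natCast]
  ring

lemma sum_vonMangoldt_mul_div_le {f : ℕ → ℝ} {k M : ℕ} (hk : 0 < k) (hM : 0 < M)
    (hf : ∀ N, f N ≤ (if N = k then 1 else 0) + if M ≤ N then 1 else 0) (X : ℕ) :
    ∑ d ∈ Ioc 0 X, Λ d * f (X / d) ≤ ψ (X / k : ℕ) - ψ (X / (k + 1) : ℕ) + ψ (X / M : ℕ) := by
  have hk_fiber : {d ∈ Ioc 0 X | X / d = k} = Ioc (X / (k + 1)) (X / k) := by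
    ext d
    simp only [mem_filter, mem_Ioc, Nat.div_lt_iff_lt_mul k.succ_pos, Nat.le_div_iff_mul_le hk]
    constructor
    · rintro ⟨⟨hd, -⟩, hX⟩
      rw [Nat.div_eq_iff hd] at hX
      lia
    · rintro ⟨hlt, hle⟩
      have hd : 0 < d := Nat.pos_of_ne_zero (by rintro rfl; simp at hlt)
      have hdk := Nat.le_mul_of_pos_right d hk
      rw [Nat.div_eq_iff hd]
      lia
  have hM_fiber : {d ∈ Ioc 0 X | M ≤ X / d} = Ioc 0 (X / M) := by
    ext d
    simp only [mem_filter, mem_Ioc, Nat.le_div_iff_mul_le hM]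
    constructor
    · rintro ⟨⟨hd, -⟩, hX⟩
      rw [Nat.le_div_iff_mul_le hd] at hX
      lia
    · rintro ⟨hd, hX⟩
      rw [Nat.le_div_iff_mul_le hd]
      exact ⟨⟨hd, (Nat.le_mul_of_pos_right d hM).trans hX⟩, mul_comm d M ▸ hX⟩
  calc ∑ d ∈ Ioc 0 X, Λ d * f (X / d)
      ≤ ∑ d ∈ Ioc 0 X, Λ d * ((if X / d = k then 1 else 0) + if M ≤ X / d then 1 else 0) :=
        sum_le_sum fun d _ => mul_le_mul_of_nonneg_left (hf _) vonMangoldt_nonneg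
    _ = ∑ d ∈ Ioc (X / (k + 1)) (X / k), Λ d + ∑ d ∈ Ioc 0 (X / M), Λ d := by
        simp only [mul_add, mul_ite, mul_one, mul_zero, sum_add_distrib, ← sum_filter, hk_fiber,
          hM_fiber]
    _ = ψ (X / k : ℕ) - ψ (X / (k + 1) : ℕ) + ψ (X / M : ℕ) := by
        simp only [Chebyshev.psi, Nat.floor_natCast]
        rw [← sum_Ioc_consecutive _ (Nat.zero_le _)
          (Nat.div_le_div_left k.le_succ hk : X / (k + 1) ≤ X / k)]
        ring

lemma log_factorial_le {n : ℕ} (hn : n ≠ 0) :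
    log n ! ≤ n * log n - n + log n / 2 + 1 := by
  obtain ⟨m, rfl⟩ := Nat.exists_eq_succ_of_ne_zero hn
  have hn' : ((m.succ : ℕ) : ℝ) ≠ 0 := mod_cast hn
  have hanti : log (Stirling.stirlingSeq m.succ) ≤ log (Stirling.stirlingSeq 1) :=
    log_le_log (Stirling.stirlingSeq'_pos m) (Stirling.stirlingSeq'_antitone m.zero_le)
  have hone : log (Stirling.stirlingSeq 1) = 1 - log 2 / 2 := by
    rw [Stirling.stirlingSeq_one, log_div (exp_ne_zero _) (by positivity), log_exp,
      log_sqrt zero_le_two]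
  rw [Stirling.log_stirlingSeq_formula, hone, log_mul two_ne_zero hn',
    log_div hn' (exp_ne_zero _), log_exp] at hanti
  linarith

lemma sub_mul_log_le {x y : ℝ} (hx : 0 < x) (hy : 0 < y) :
    (y - x) * log x ≤ (y * log y - y) - (x * log x - x) := by
  have h : y * log (x / y) ≤ y * (x / y - 1) := by
    gcongr
    exact log_le_sub_one_of_pos (div_pos hx hy)
  rw [log_div hx.ne' hy.ne', mul_sub, mul_sub, mul_div_cancel₀ _ hy.ne'] at h
  linarith

lemma abs_log_factorial_floor_sub_le {x : ℝ} (hx : 1 ≤ x) :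
    |log ⌊x⌋₊ ! - (x * log x - x)| ≤ log x + 1 := by
  have hx0 : 0 < x := one_pos.trans_le hx
  have hm : 1 ≤ ⌊x⌋₊ := Nat.one_le_floor_iff _ |>.2 hx
  have hm1 : (1 : ℝ) ≤ ⌊x⌋₊ := mod_cast hm
  have hm0 : (0 : ℝ) < ⌊x⌋₊ := one_pos.trans_le hm1
  have hmx : (⌊x⌋₊ : ℝ) ≤ x := Nat.floor_le hx0.le
  have hlog_m : 0 ≤ log ⌊x⌋₊ := log_nonneg hm1
  have hlog : log ⌊x⌋₊ ≤ log x := log_le_log hm0 hmx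
  have hlog_pi : 0 ≤ log (2 * π) := log_nonneg (by linarith [pi_gt_three])
  have hmono : 0 ≤ (x - ⌊x⌋₊) * log ⌊x⌋₊ := mul_nonneg (sub_nonneg.2 hmx) hlog_m
  have hstep : (x - ⌊x⌋₊) * log x ≤ 1 * log x := by
    gcongr
    · exact log_nonneg hx
    · linarith [Nat.lt_floor_add_one x]
  have hlower := Stirling.le_log_factorial_stirling (Nat.one_le_iff_ne_zero.1 hm)
  have hupper := log_factorial_le (Nat.one_le_iff_ne_zero.1 hm)
  have hgap_lower := sub_mul_log_le hm0 hx0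
  have hgap_upper := sub_mul_log_le hx0 hm0
  rw [abs_le]
  constructor <;> linarith

lemma abs_sum_mul_log_factorial_div_add_le {w : Finset (ℕ × ℤ)} {X : ℕ}
    (h0 : ∑ t ∈ w, (t.2 / t.1 : ℝ) = 0) (hw : ∀ t ∈ w, 0 < t.1 ∧ t.1 ≤ X) :
    |∑ t ∈ w, t.2 * log (X / t.1)! + X * ∑ t ∈ w, t.2 * (log t.1 / t.1)| ≤
      (∑ t ∈ w, |t.2| : ℤ) * (log X + 1) := by
  have hmain : ∑ t ∈ w, t.2 * ((X / t.1 : ℝ) * log (X / t.1) - X / t.1) =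
      -(X * ∑ t ∈ w, t.2 * (log t.1 / t.1)) := by
    calc _ = ∑ t ∈ w, ((X * (log X - 1)) * (t.2 / t.1 : ℝ) - X * (t.2 * (log t.1 / t.1))) := by
          refine sum_congr rfl fun t ht => ?_
          have hj : (t.1 : ℝ) ≠ 0 := mod_cast (hw t ht).1.ne'
          have hX : (X : ℝ) ≠ 0 := mod_cast ((hw t ht).1.trans_le (hw t ht).2).ne'
          rw [log_div hX hj]
          ring
      _ = _ := by rw [sum_sub_distrib, ← mul_sum, ← mul_sum, h0, mul_zero, zero_sub]
  rw [← sub_neg_eq_add, ← hmain, ← sum_sub_distrib, Int.cast_sum, sum_mul]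
  refine (abs_sum_le_sum_abs _ _).trans (sum_le_sum fun t ht => ?_)
  have hj : (1 : ℝ) ≤ t.1 := mod_cast (hw t ht).1
  have hjX : (1 : ℝ) ≤ X / t.1 :=
    (one_le_div (one_pos.trans_le hj)).2 (mod_cast (hw t ht).2)
  rw [← mul_sub, abs_mul, Int.cast_abs, ← Nat.floor_div_eq_div (K := ℝ)]
  gcongr
  refine (abs_log_factorial_floor_sub_le hjX).trans ?_
  gcongr
  exact div_le_self X.cast_nonneg hj

/-- The weight detecting `(8n / 9, n]`, supported on divisors of `15120 = 2 ^ 4 * 3 ^ 3 * 5 * 7` and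
encoded as the set of its pairs `(j, c)`. Its coefficients solve the linear program that maximises
`-∑ c * log j / j` subject to `∑ c / j = 0`, `floorSum weight N ≤ 1` for `N ≡ 8 mod 15120` and
`floorSum weight N ≤ 0` for all other `N`. -/
def weight : Finset (ℕ × ℤ) :=
  ⟨[(8, 1), (9, -1), (16, -1), (18, 1), (24, -1), (27, 1), (40, -1), (45, 1), (48, 1), (54, -1),
    (56, -1), (63, 1), (80, 1), (84, -1), (90, -1), (112, 1), (120, 2), (126, -1), (135, -2),
    (144, -1), (168, 3), (189, -1), (240, -3), (252, 1), (270, 3), (280, 2), (315, -2),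
    (336, -2), (360, -1), (378, 1), (420, 3), (504, -1), (540, -1), (560, -2), (630, 2),
    (720, 3), (840, -8), (945, 6), (1008, 1), (1080, 1), (1260, -4), (1680, 7), (1890, -6),
    (2160, -2), (2520, 2), (3780, 1), (5040, 2), (7560, 2), (15120, 7)], by decide⟩

lemma dvd_of_mem_weight : ∀ t ∈ weight, t.1 ∣ 15120 := by
  decide +kernel

lemma sum_abs_weight : ∑ t ∈ weight, |t.2| = 102 := by
  decide +kernel

lemma floorSum_weight_period : floorSum weight 15120 = 0 := by
  decide +kernel

lemma sum_weight_div_eq_zero : ∑ t ∈ weight, (t.2 / t.1 : ℝ) = 0 := by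
  rw [sum_div_eq_floorSum_div dvd_of_mem_weight (by norm_num), floorSum_weight_period,
    Int.cast_zero, zero_div]

lemma sum_weight_mul_log_div_le :
    ∑ t ∈ weight, t.2 * (log t.1 / t.1) ≤ -(110 * log 2 / 15120) := by
  have hprod : 2 ^ 110 * ∏ t ∈ weight, t.1 ^ (t.2.toNat * (15120 / t.1)) ≤
      ∏ t ∈ weight, t.1 ^ ((-t.2).toNat * (15120 / t.1)) := by
    decide +kernel
  have hpos : 0 < ∏ t ∈ weight, t.1 ^ (t.2.toNat * (15120 / t.1)) :=
    prod_pos fun t ht => pow_pos (Nat.pos_of_dvd_of_pos (dvd_of_mem_weight t ht) (by norm_num)) _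
  have hlog := log_le_log (Nat.cast_pos.2 (Nat.mul_pos (by norm_num) hpos))
    (Nat.cast_le (α := ℝ).2 hprod)
  rw [Nat.cast_mul, log_mul (by norm_num) (Nat.cast_pos.2 hpos).ne', Nat.cast_pow, log_pow,
    log_prod_pow_mul_div dvd_of_mem_weight (by norm_num),
    log_prod_pow_mul_div dvd_of_mem_weight (by norm_num)] at hlog
  rw [sum_intCast_mul_eq_sub weight fun j => log j / j]
  push_cast at hlog
  linarith

lemma sum_weight_toNat_mul_div_le : ∀ q < 126, ∀ r < 120,
    ∑ t ∈ weight, t.2.toNat * ((120 * q + r) / t.1) ≤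
      ∑ t ∈ weight, (-t.2).toNat * ((120 * q + r) / t.1) + if 120 * q + r = 8 then 1 else 0 := by
  simp only [weight, Int.reduceNeg, sum_mk, Multiset.map_coe, List.map, Int.toNat_one, one_mul,
    Int.reduceToNat, zero_mul, Multiset.sum_coe, List.sum_cons, List.sum_nil, add_zero, zero_add,
    neg_neg]
  -- With `weight` unfolded, the kernel evaluates this with its built-in arithmetic on `ℕ` literals.
  decide +kernel

lemma floorSum_weight_le_of_lt {N : ℕ} (hN : N < 15120) :
    floorSum weight N ≤ if N = 8 then 1 else 0 := by
  have h := sum_weight_toNat_mul_div_le (N / 120) (by lia) (N % 120) (by lia)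
  rw [Nat.div_add_mod] at h
  have hsplit : floorSum weight N = (∑ t ∈ weight, t.2.toNat * (N / t.1) : ℕ) -
      (∑ t ∈ weight, (-t.2).toNat * (N / t.1) : ℕ) := by
    rw [Nat.cast_sum, Nat.cast_sum]
    simp only [Nat.cast_mul]
    exact sum_intCast_mul_eq_sub weight fun j => ((N / j : ℕ) : ℤ)
  rw [hsplit]
  split_ifs at h ⊢ <;> lia

lemma floorSum_weight_le (N : ℕ) :
    floorSum weight N ≤ (if N = 8 then 1 else 0) + if 15120 ≤ N then 1 else 0 := by
  have hmod := floorSum_weight_le_of_lt (N.mod_lt (by norm_num : 15120 > 0))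
  rw [floorSum_mod dvd_of_mem_weight floorSum_weight_period] at hmod
  split_ifs at hmod ⊢ <;> lia

lemma le_psi_sub_psi {n : ℕ} (hn : 1890 ≤ n) :
    110 * log 2 / 1890 * n - 102 * (log (8 * n) + 1) - ψ (n / 1890 : ℝ) ≤
      ψ n - ψ (8 * n / 9 : ℕ) := by
  have hdiv (t) (ht : t ∈ weight) : 0 < t.1 ∧ t.1 ≤ 8 * n := by
    have hle := Nat.le_of_dvd (by norm_num) (dvd_of_mem_weight t ht)
    exact ⟨Nat.pos_of_dvd_of_pos (dvd_of_mem_weight t ht) (by norm_num), by lia⟩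
  have hfact := (abs_le.1 (abs_sum_mul_log_factorial_div_add_le sum_weight_div_eq_zero hdiv)).1
  have hmain : ((8 * n : ℕ) : ℝ) * ∑ t ∈ weight, t.2 * (log t.1 / t.1) ≤
      (8 * n : ℕ) * -(110 * log 2 / 15120) := by
    gcongr
    exact sum_weight_mul_log_div_le
  have hpsi := sum_vonMangoldt_mul_div_le (f := fun N => (floorSum weight N : ℝ)) (k := 8)
    (M := 15120) (by norm_num) (by norm_num) (fun N => mod_cast floorSum_weight_le N) (8 * n)
  have htail : ψ (8 * n / 15120 : ℕ) ≤ ψ (n / 1890 : ℝ) := by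
    refine Chebyshev.psi_mono (Nat.cast_div_le.trans (le_of_eq ?_))
    push_cast
    ring
  rw [sum_mul_log_factorial_div, sum_abs_weight] at hfact
  rw [Nat.mul_div_cancel_left n (by norm_num)] at hpsi
  push_cast at hfact hmain
  linarith

lemma exists_prime_of_log_lt_theta_sub {a n : ℕ} (h : log n < θ n - θ a) :
    ∃ p : ℕ, p.Prime ∧ a < p ∧ p < n := by
  by_contra! hno
  have hsubset : {p ∈ Ioc 0 n | p.Prime} ⊆ {n} ∪ {p ∈ Ioc 0 a | p.Prime} := by
    intro p hp
    simp only [mem_filter, mem_Ioc, mem_union, mem_singleton] at hp ⊢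
    have hpn := hno p hp.2
    lia
  have hle : θ n ≤ log n + θ a := by
    simp only [Chebyshev.theta, Nat.floor_natCast]
    rw [← sum_singleton (fun p : ℕ => log p) n, ← sum_union_inter]
    exact (sum_le_sum_of_subset_of_nonneg hsubset fun p _ _ => log_natCast_nonneg p).trans
      (le_add_of_nonneg_right (sum_nonneg fun p _ => log_natCast_nonneg p))
  linarith

lemma chebyshev_error_lt {x : ℝ} (hx : 2 ^ 20 ≤ x) :
    2 * √x * log x + 103 * log x + 102 * (3 * log 2 + 1) < (108 * log 2 - 4) / 1890 * x := by
  have hr : 1024 ≤ √x := le_sqrt_of_sq_le (by norm_num at hx ⊢; exact hx)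
  have hx_sq : x = √x ^ 2 := (sq_sqrt (by linarith)).symm
  have hlog_x : log x = 2 * log √x := by rw [log_sqrt (by linarith)]; ring
  have hlog_r : log √x ≤ 10 * log 2 + (√x / 1024 - 1) := by
    have h := log_le_sub_one_of_pos (show 0 < √x / 1024 by linarith)
    rw [log_div (by linarith) (by norm_num), show (1024 : ℝ) = 2 ^ 10 by norm_num, log_pow] at h
    push_cast at h
    linarith
  have hlog_two_gt := log_two_gt_d9
  have hlog_two_lt := log_two_lt_d9
  calc 2 * √x * log x + 103 * log x + 102 * (3 * log 2 + 1)
      = (4 * √x + 206) * log √x + 102 * (3 * log 2 + 1) := by rw [hlog_x]; ring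
    _ ≤ (4 * √x + 206) * (√x / 1024 + 5.932) + 102 * (3 * 0.6932 + 1) := by
        gcongr <;> linarith
    _ < (108 * 0.693 - 4) / 1890 * √x ^ 2 := by nlinarith
    _ ≤ (108 * log 2 - 4) / 1890 * x := by
        rw [← hx_sq]
        gcongr
        linarith

lemma log_lt_theta_sub_theta {n : ℕ} (hn : 2 ^ 20 ≤ n) :
    log n < θ n - θ (8 * n / 9 : ℕ) := by
  have hn_real : (2 : ℝ) ^ 20 ≤ n := mod_cast hn
  have hpsi := le_psi_sub_psi (show 1890 ≤ n by lia)
  have htail := Chebyshev.psi_le_const_mul_self (show 0 ≤ (n / 1890 : ℝ) by positivity)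
  have hprime_powers := Chebyshev.psi_sub_theta_le (show 1 ≤ (n : ℝ) by linarith)
  have htheta := Chebyshev.theta_le_psi (8 * n / 9 : ℕ)
  have herror := chebyshev_error_lt hn_real
  have hlog_four : log 4 = 2 * log 2 := by
    rw [show (4 : ℝ) = 2 ^ 2 by norm_num, log_pow, Nat.cast_ofNat]
  have hlog_eight : log (8 * n) = 3 * log 2 + log n := by
    rw [log_mul (by norm_num) (by linarith), show (8 : ℝ) = 2 ^ 3 by norm_num, log_pow,
      Nat.cast_ofNat]
  rw [hlog_four] at htail
  rw [hlog_eight] at hpsi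
  linarith

/-- The chain of primes from `53` to beyond `2 ^ 20` in which each term is the largest prime below
`9 / 8` times its predecessor. -/
def primeChain : List ℕ :=
  [53, 59, 61, 67, 73, 79, 83, 89, 97, 109, 113, 127, 139, 151, 167, 181, 199, 223, 241, 271,
   293, 317, 353, 397, 443, 491, 547, 613, 683, 761, 853, 953, 1069, 1201, 1327, 1489, 1669,
   1877, 2111, 2371, 2663, 2971, 3331, 3739, 4201, 4723, 5309, 5953, 6691, 7523, 8461, 9511,
   10691, 12011, 13499, 15173, 17053, 19183, 21577, 24251, 27281, 30689, 34519, 38833, 43669,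
   49123, 55259, 62143, 69899, 78623, 88427, 99469, 111893, 125863, 141587, 159233, 179119,
   201499, 226669, 254993, 286859, 322709, 363047, 408427, 459479, 516911, 581521, 654209,
   735983, 827969, 931421, 1047841, 1178809]

set_option maxRecDepth 100000 in
lemma prime_of_mem_primeChain : ∀ p ∈ primeChain, p.Prime := by
  simp only [primeChain, List.forall_mem_cons]
  norm_num

lemma isChain_primeChain : primeChain.IsChain fun a b => 8 * b < 9 * a := by
  decide +kernel

lemma exists_mem_of_isChain {c d : ℕ} : ∀ {a : ℕ} {l : List ℕ} {n : ℕ},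
    (a :: l).IsChain (fun a b => c * b < d * a) → a < n → (∃ b ∈ l, n ≤ b) →
      ∃ p ∈ a :: l, c * n < d * p ∧ p < n
  | a, b :: l, n, hchain, ha, hb => by
    rw [List.isChain_cons_cons] at hchain
    rcases lt_or_ge b n with hbn | hnb
    · have hl : ∃ b ∈ l, n ≤ b := by
        obtain ⟨b', hb', hnb'⟩ := hb
        exact ⟨b', (List.mem_cons.1 hb').resolve_left (by lia), hnb'⟩
      obtain ⟨p, hp, hpn⟩ := exists_mem_of_isChain hchain.2 hbn hl
      exact ⟨p, List.mem_cons_of_mem a hp, hpn⟩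
    · exact ⟨a, List.mem_cons_self, (Nat.mul_le_mul_left c hnb).trans_lt hchain.1, ha⟩

lemma exists_prime_of_lt_fifty_four : ∀ n ∈ Ico 30 54, n ∉ ({35, 36, 37, 53} : Set ℕ) →
    ∃ p < n, p.Prime ∧ 8 * n < 9 * p := by
  decide

/-- For every `n ≥ 30` with `n ∉ {35, 36, 37, 53}`, the open interval
`(8n/9, n)` contains a prime. -/
theorem exists_prime_in_eight_ninths (n : ℕ) (hn : 30 ≤ n)
    (hn' : n ∉ ({35, 36, 37, 53} : Set ℕ)) :
    ∃ p : ℕ, p.Prime ∧ 8 * n < 9 * p ∧ p < n := by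
  rcases lt_or_ge n 54 with hsmall | hn54
  · obtain ⟨p, hpn, hp, hlt⟩ :=
      exists_prime_of_lt_fifty_four n (mem_Ico.2 ⟨hn, hsmall⟩) hn'
    exact ⟨p, hp, hlt, hpn⟩
  rcases le_or_gt n (2 ^ 20) with hmedium | hlarge
  · obtain ⟨p, hp, hbounds⟩ := exists_mem_of_isChain isChain_primeChain hn54
      ⟨1178809, by simp, by lia⟩
    exact ⟨p, prime_of_mem_primeChain p hp, hbounds⟩
  · obtain ⟨p, hp, hlt, hpn⟩ :=
      exists_prime_of_log_lt_theta_sub (log_lt_theta_sub_theta hlarge.le)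
    exact ⟨p, hp, by lia, hpn⟩
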